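/- Let f, g, h be Schwartz functions on ℝ³ and let m be a smooth positive weight function on ℝ³ all of whose derivatives are polynomially bounded. Then ⟨Q(g,f), h m²⟩ − ⟨Q(g, f m), h m⟩ = −2 ∫_{ℝ³} (a*g) : (∇f ⊗ ∇m) h m dv − ∫_{ℝ³} (a*g) : (∇²m) f h m dv, where a*g denotes the matrix-valued convolution (a*g)(v) = ∫_{ℝ³} a(v−v*) g(v*) dv* and ∇²m is the Hessian of m. -/

import Mathlib

/-!
The identity holds pointwise before integration. Since `|a(z)| ≤ 2/|z|` is locally integrable on
`ℝ³`, a convolution of an entry of `a` with a Schwartz function is differentiable, its derivatives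
fall on the Schwartz factor (`kconv_hasFDerivAt`, `pd_kconv`), and it grows at most polynomially
(`kconv_growth`). Because `a` is symmetric, `∑_i ∂_i (a_ij * g) = ∑_i a_ji * ∂_i g`, so the
first-order terms of the collision operator cancel and
`Q(g,F) = (a*g) : ∇²F − c F` with `c = ∑_ij a_ij * ∂_i ∂_j g` (`landauQ_eq`).

The zeroth-order term commutes with multiplication by `m`, hence the Leibniz rule for `∇²(fm)` and
the symmetry of `a*g` give
`m Q(g,f) − Q(g,fm) = −2 (a*g) : (∇f ⊗ ∇m) − ((a*g) : ∇²m) f`.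
Multiplying by `h m` and integrating yields the claim; the integrals may be split because each
term is a polynomially growing convolution times a Schwartz function (`integrable_kconv_mul`).
-/

open MeasureTheory Real Finset

noncomputable section

abbrev E3 := EuclideanSpace ℝ (Fin 3)

/-- The Japanese bracket `⟨v⟩ = √(1+|v|²)`. -/
def jap (v : E3) : ℝ := Real.sqrt (1 + ‖v‖ ^ 2)

/-- The projection matrix `Π(z)` with entries `δ_ij − z_i z_j / |z|²`. -/
def Pi3 (z : E3) : Matrix (Fin 3) (Fin 3) ℝ :=
  Matrix.of fun i j => (if i = j then (1 : ℝ) else 0) - z i * z j / ‖z‖ ^ 2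

/-- The Coulomb Landau kernel `a(z) = |z|⁻¹ Π(z)`. -/
def aK (z : E3) : Matrix (Fin 3) (Fin 3) ℝ :=
  Matrix.of fun i j => ‖z‖⁻¹ * Pi3 z i j

/-- Partial derivative `∂_i f`. -/
def pd (i : Fin 3) (f : E3 → ℝ) : E3 → ℝ :=
  fun v => fderiv ℝ f v (EuclideanSpace.single i 1)

/-- The Landau collision operator with Coulomb potential:
`Q(g,h)(v) = ∇_v · ∫ a(v−v*) ( g(v*) ∇h(v) − ∇g(v*) h(v) ) dv*`. -/
def landauQ (g h : E3 → ℝ) : E3 → ℝ := fun v =>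
  ∑ i : Fin 3, fderiv ℝ (fun w =>
      ∫ vs : E3, ∑ j : Fin 3, aK (w - vs) i j * (g vs * pd j h w - pd j g vs * h w)) v
    (EuclideanSpace.single i 1)

/-- The pairing `⟨f,g⟩ = ∫ f g dv`. -/
def pairL (f g : E3 → ℝ) : ℝ := ∫ v : E3, f v * g v

/-- Weighted Lebesgue norm `‖f‖_{L^p_l} = (∫ |f|^p ⟨v⟩^{lp})^{1/p}`. -/
def Lpl (p l : ℝ) (f : E3 → ℝ) : ℝ :=
  (∫ v : E3, |f v| ^ p * jap v ^ (l * p)) ^ (1 / p)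

/-- Iterated partial derivative in direction `i`. -/
def pdPow (i : Fin 3) : ℕ → (E3 → ℝ) → E3 → ℝ
  | 0, f => f
  | n + 1, f => pd i (pdPow i n f)

/-- Multi-index partial derivative `∂^m f`. -/
def pdM (m : Fin 3 → ℕ) (f : E3 → ℝ) : E3 → ℝ :=
  pdPow 0 (m 0) (pdPow 1 (m 1) (pdPow 2 (m 2) f))

/-- Multi-indices `m` with `|m| ≤ n`. -/
def multiIdx (n : ℕ) : Finset (Fin 3 → ℕ) :=
  (Fintype.piFinset fun _ : Fin 3 => Finset.range (n + 1)).filter fun m => (∑ i, m i) ≤ n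

/-- Square of the weighted Sobolev norm `‖f‖²_{H^n_l} = Σ_{|m|≤n} ‖∂^m f‖²_{L²_l}`. -/
def HSobSq (n : ℕ) (l : ℝ) (f : E3 → ℝ) : ℝ :=
  ∑ m ∈ multiIdx n, (Lpl 2 l (pdM m f)) ^ 2

/-- Weighted Sobolev norm `‖f‖_{H^n_l}`. -/
def HSob (n : ℕ) (l : ℝ) (f : E3 → ℝ) : ℝ :=
  Real.sqrt (HSobSq n l f)

/-- Rotational derivative `(v_i ∂_j − v_j ∂_i) f`. -/
def rotD (i j : Fin 3) (f : E3 → ℝ) : E3 → ℝ :=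
  fun v => v i * pd j f v - v j * pd i f v

/-- Square of the anisotropic norm
`‖f‖²_{𝖧¹_A} = Σ_{i<j} ‖(v_i ∂_j − v_j ∂_i) f‖²_{L²_{−3/2}} + ‖f‖²_{H¹_{−3/2}}`. -/
def HAsq (f : E3 → ℝ) : ℝ :=
  (∑ p ∈ Finset.univ.filter (fun p : Fin 3 × Fin 3 => p.1 < p.2),
    (Lpl 2 (-(3/2)) (rotD p.1 p.2 f)) ^ 2) + HSobSq 1 (-(3/2)) f

/-- The anisotropic norm `‖f‖_{𝖧¹_A}`. -/
def HA (f : E3 → ℝ) : ℝ := Real.sqrt (HAsq f)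

end

noncomputable section

/-- The matrix-valued convolution `(a*g)(v) = ∫ a(v−v*) g(v*) dv*`. -/
def aConv (g : E3 → ℝ) (v : E3) : Matrix (Fin 3) (Fin 3) ℝ :=
  Matrix.of fun i j => ∫ vs : E3, aK (v - vs) i j * g vs

/-! ### The kernel -/

lemma measurable_aK (i j : Fin 3) : Measurable fun z : E3 => aK z i j := by
  simp only [aK, Pi3, Matrix.of_apply]
  fun_prop

lemma aK_symm (z : E3) (i j : Fin 3) : aK z i j = aK z j i := by
  simp only [aK, Pi3, Matrix.of_apply, eq_comm (a := i) (b := j), mul_comm (z i) (z j)]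

lemma abs_aK_le (z : E3) (i j : Fin 3) : |aK z i j| ≤ 2 * ‖z‖⁻¹ := by
  have hi : |z i| ≤ ‖z‖ := PiLp.norm_apply_le z i
  have hj : |z j| ≤ ‖z‖ := PiLp.norm_apply_le z j
  have h1 : |z i * z j / ‖z‖ ^ 2| ≤ 1 := by
    rw [abs_div, abs_mul, abs_of_nonneg (sq_nonneg ‖z‖)]
    apply div_le_one_of_le₀ _ (sq_nonneg _)
    rw [sq]
    gcongr
  have h2 : |(if i = j then (1 : ℝ) else 0)| ≤ 1 := by split_ifs <;> simp
  simp only [aK, Pi3, Matrix.of_apply, abs_mul, abs_inv, abs_norm]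
  rw [mul_comm]
  gcongr
  exact (abs_sub _ _).trans (by linarith)

/-- `1/|z|` is integrable near the origin of `ℝ³`; the second factor takes care of infinity. -/
lemma integrable_inv_norm_mul :
    Integrable fun z : E3 => ‖z‖⁻¹ * ((1 + ‖z‖) ^ 4)⁻¹ := by
  have := integrable_fun_norm_addHaar (volume : Measure E3)
    (f := fun r : ℝ => r⁻¹ * ((1 + r) ^ 4)⁻¹)
  rw [this]
  have h : Integrable fun x : ℝ => (1 + ‖x‖) ^ (-(3 : ℝ)) :=
    integrable_one_add_norm (by simp)
  refine Integrable.mono' h.integrableOn (by fun_prop) ?_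
  filter_upwards [self_mem_ae_restrict measurableSet_Ioi] with x hx
  have hx : 0 < x := hx
  have e : (1 + ‖x‖) ^ (-(3 : ℝ)) = ((1 + x) ^ 3)⁻¹ := by
    rw [Real.norm_of_nonneg hx.le, Real.rpow_neg (by positivity)]
    norm_cast
  rw [e, Real.norm_of_nonneg (by positivity)]
  simp only [finrank_euclideanSpace, Fintype.card_fin, smul_eq_mul]
  have : x ^ (3 - 1) * (x⁻¹ * ((1 + x) ^ 4)⁻¹) = (x / (1 + x)) * ((1 + x) ^ 3)⁻¹ := by
    norm_num
    field_simp
  rw [this]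
  apply mul_le_of_le_one_left (by positivity)
  rw [div_le_one (by positivity)]
  linarith

/-! ### Convolutions of Schwartz functions with kernels of size `1/|z|` -/

/-- The convolution `(k * φ)(w) = ∫ k(w − y) φ(y) dy`. -/
def kconv (k φ : E3 → ℝ) (w : E3) : ℝ := ∫ y : E3, k (w - y) * φ y

lemma kconv_eq (k φ : E3 → ℝ) (w : E3) : kconv k φ w = ∫ z : E3, k z * φ (w - z) := by
  rw [kconv, ← integral_sub_left_eq_self _ volume w]
  simp

/-- Decay in `z`, with polynomial loss in the shift `w`, by `1 + |z| ≤ (1 + |w|)(1 + |w − z|)`. -/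
lemma schwartz_shift_bound {F : Type*} [NormedAddCommGroup F] [NormedSpace ℝ F]
    (φ : SchwartzMap E3 F) :
    ∃ C : ℝ, 0 ≤ C ∧ ∀ w z : E3, ‖φ (w - z)‖ ≤ C * (1 + ‖w‖) ^ 4 * ((1 + ‖z‖) ^ 4)⁻¹ := by
  refine ⟨2 ^ 4 * (Finset.Iic (4, 0)).sup (fun m => SchwartzMap.seminorm ℝ m.1 m.2) φ,
    mul_nonneg (by norm_num) (apply_nonneg _ _), fun w z => ?_⟩
  have h := SchwartzMap.one_add_le_sup_seminorm_apply (𝕜 := ℝ) (m := (4, 0)) le_rfl le_rfl φ (w - z)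
  rw [norm_iteratedFDeriv_zero] at h
  simp only at h
  set S := (2 : ℝ) ^ 4 * (Finset.Iic (4, 0)).sup (fun m => SchwartzMap.seminorm ℝ m.1 m.2) φ
  have h1 : 1 + ‖z‖ ≤ (1 + ‖w‖) * (1 + ‖w - z‖) := by
    have : ‖z‖ ≤ ‖w‖ + ‖w - z‖ := by
      calc ‖z‖ = ‖w - (w - z)‖ := by simp
        _ ≤ _ := norm_sub_le _ _
    nlinarith [norm_nonneg w, norm_nonneg (w - z)]
  rw [le_mul_inv_iff₀ (by positivity)]
  calc ‖φ (w - z)‖ * (1 + ‖z‖) ^ 4 ≤ ‖φ (w - z)‖ * ((1 + ‖w‖) * (1 + ‖w - z‖)) ^ 4 := by gcongr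
    _ = ((1 + ‖w - z‖) ^ 4 * ‖φ (w - z)‖) * (1 + ‖w‖) ^ 4 := by ring
    _ ≤ _ := by gcongr

lemma kernel_mul_shift_bound {F : Type*} [NormedAddCommGroup F] [NormedSpace ℝ F]
    {k : E3 → ℝ} (hk : ∀ z, |k z| ≤ 2 * ‖z‖⁻¹) (φ : SchwartzMap E3 F) :
    ∃ C : ℝ, 0 ≤ C ∧ ∀ w z : E3,
      ‖k z • φ (w - z)‖ ≤ C * (1 + ‖w‖) ^ 4 * (‖z‖⁻¹ * ((1 + ‖z‖) ^ 4)⁻¹) := by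
  obtain ⟨C, hC, h⟩ := schwartz_shift_bound φ
  refine ⟨2 * C, by positivity, fun w z => ?_⟩
  rw [norm_smul, Real.norm_eq_abs]
  calc |k z| * ‖φ (w - z)‖ ≤ (2 * ‖z‖⁻¹) * (C * (1 + ‖w‖) ^ 4 * ((1 + ‖z‖) ^ 4)⁻¹) :=
        mul_le_mul (hk z) (h w z) (norm_nonneg _) (by positivity)
    _ = _ := by ring

lemma integrable_kernel_smul {F : Type*} [NormedAddCommGroup F] [NormedSpace ℝ F]
    {k : E3 → ℝ} (hm : Measurable k) (hk : ∀ z, |k z| ≤ 2 * ‖z‖⁻¹)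
    (φ : SchwartzMap E3 F) (w : E3) : Integrable fun z => k z • φ (w - z) := by
  obtain ⟨C, -, h⟩ := kernel_mul_shift_bound hk φ
  refine Integrable.mono' (integrable_inv_norm_mul.const_mul (C * (1 + ‖w‖) ^ 4)) ?_
    (.of_forall fun z => h w z)
  exact hm.aestronglyMeasurable.smul
    (φ.continuous.comp (continuous_const.sub continuous_id)).aestronglyMeasurable

lemma integrable_kernel_mul {k : E3 → ℝ} (hm : Measurable k) (hk : ∀ z, |k z| ≤ 2 * ‖z‖⁻¹)
    (φ : SchwartzMap E3 ℝ) (w : E3) : Integrable fun y => k (w - y) * φ y := by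
  simpa using (integrable_kernel_smul hm hk φ w).comp_sub_left w

lemma kconv_growth {k : E3 → ℝ} (hk : ∀ z, |k z| ≤ 2 * ‖z‖⁻¹)
    (φ : SchwartzMap E3 ℝ) : ∃ C : ℝ, ∀ w, |kconv k φ w| ≤ C * (1 + ‖w‖) ^ 4 := by
  obtain ⟨C, -, h⟩ := kernel_mul_shift_bound hk φ
  refine ⟨C * ∫ z : E3, ‖z‖⁻¹ * ((1 + ‖z‖) ^ 4)⁻¹, fun w => ?_⟩
  rw [kconv_eq, ← Real.norm_eq_abs]
  refine (norm_integral_le_of_norm_le (integrable_inv_norm_mul.const_mul (C * (1 + ‖w‖) ^ 4))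
    (.of_forall fun z => h w z)).trans_eq ?_
  rw [integral_const_mul]
  ring

/-- The Schwartz function `∂_i φ`. -/
def spd (i : Fin 3) (φ : SchwartzMap E3 ℝ) : SchwartzMap E3 ℝ :=
  LineDeriv.lineDerivOp (EuclideanSpace.single i (1 : ℝ)) φ

lemma coe_spd (i : Fin 3) (φ : SchwartzMap E3 ℝ) : ⇑(spd i φ) = pd i φ := by
  ext v
  exact SchwartzMap.lineDerivOp_apply_eq_fderiv _ _ _

/-- Differentiation under the integral sign: only the Schwartz factor is differentiated, so the
singularity of `k` does not get worse. -/
lemma kconv_hasFDerivAt {k : E3 → ℝ} (hm : Measurable k) (hk : ∀ z, |k z| ≤ 2 * ‖z‖⁻¹)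
    (φ : SchwartzMap E3 ℝ) (w : E3) :
    HasFDerivAt (kconv k φ) (∫ z : E3, k z • fderiv ℝ φ (w - z)) w := by
  rw [show kconv k φ = fun w => ∫ z : E3, k z * φ (w - z) from funext (kconv_eq k φ)]
  obtain ⟨C, hC, h⟩ := kernel_mul_shift_bound hk (SchwartzMap.fderivCLM ℝ E3 ℝ φ)
  refine hasFDerivAt_integral_of_dominated_of_fderiv_le
    (F := fun w z => k z * φ (w - z)) (F' := fun w z => k z • fderiv ℝ φ (w - z))
    (s := Metric.ball w 1)
    (bound := fun z => C * (2 + ‖w‖) ^ 4 * (‖z‖⁻¹ * ((1 + ‖z‖) ^ 4)⁻¹))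
    (Metric.ball_mem_nhds w one_pos)
    (.of_forall fun x => (integrable_kernel_smul hm hk φ x).aestronglyMeasurable)
    (integrable_kernel_smul hm hk φ w)
    (integrable_kernel_smul hm hk (SchwartzMap.fderivCLM ℝ E3 ℝ φ) w).aestronglyMeasurable
    (.of_forall fun z x hx => (h x z).trans ?_)
    (integrable_inv_norm_mul.const_mul _)
    (.of_forall fun z x _ => ?_)
  · have : ‖x‖ ≤ 1 + ‖w‖ := by
      have h1 : ‖x - w‖ < 1 := by simpa [dist_eq_norm] using hx
      have h2 := norm_add_le (x - w) w
      rw [sub_add_cancel] at h2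
      linarith
    gcongr ?_ * ?_ ^ 4 * ?_
    linarith
  · have h1 : HasFDerivAt φ (fderiv ℝ φ (x - z)) (x - z) := φ.differentiableAt.hasFDerivAt
    have h2 := h1.comp x ((hasFDerivAt_id x).sub_const z)
    simpa using! h2.const_mul (k z)

lemma kconv_differentiable {k : E3 → ℝ} (hm : Measurable k) (hk : ∀ z, |k z| ≤ 2 * ‖z‖⁻¹)
    (φ : SchwartzMap E3 ℝ) : Differentiable ℝ (kconv k φ) :=
  fun w => (kconv_hasFDerivAt hm hk φ w).differentiableAt

lemma pd_kconv {k : E3 → ℝ} (hm : Measurable k) (hk : ∀ z, |k z| ≤ 2 * ‖z‖⁻¹)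
    (φ : SchwartzMap E3 ℝ) (i : Fin 3) : pd i (kconv k φ) = kconv k (spd i φ) := by
  ext w
  have hI : Integrable fun z => k z • fderiv ℝ φ (w - z) :=
    integrable_kernel_smul hm hk (SchwartzMap.fderivCLM ℝ E3 ℝ φ) w
  rw [pd, (kconv_hasFDerivAt hm hk φ w).fderiv, kconv_eq, ContinuousLinearMap.integral_apply hI]
  simp [coe_spd, pd]

/-- Convolutions grow at most polynomially, hence are integrable against a temperate function times
a Schwartz function. -/
lemma integrable_kconv_mul {k : E3 → ℝ} (hm : Measurable k) (hk : ∀ z, |k z| ≤ 2 * ‖z‖⁻¹)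
    (φ ψ : SchwartzMap E3 ℝ) {u : E3 → ℝ} (hu : u.HasTemperateGrowth) :
    Integrable fun v => kconv k φ v * (u v * ψ v) := by
  obtain ⟨C, hC⟩ := kconv_growth hk φ
  set S : SchwartzMap E3 ℝ :=
    SchwartzMap.smulLeftCLM ℝ (fun v : E3 => (1 + ‖v‖ ^ 2) ^ 2 * u v) ψ with hS
  have hw : (fun v : E3 => (1 + ‖v‖ ^ 2) ^ 2 * u v).HasTemperateGrowth := by fun_prop
  refine Integrable.mono' (S.integrable.norm.const_mul (4 * C)) ?_ (.of_forall fun v => ?_)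
  · exact ((kconv_differentiable hm hk φ).continuous.mul
      (hu.1.continuous.mul ψ.continuous)).aestronglyMeasurable
  · have hC0 : 0 ≤ C := by simpa using (abs_nonneg _).trans (hC 0)
    have h1 : (1 + ‖v‖) ^ 4 ≤ 4 * (1 + ‖v‖ ^ 2) ^ 2 := by
      have : (1 + ‖v‖) ^ 2 ≤ 2 * (1 + ‖v‖ ^ 2) := by nlinarith [sq_nonneg (1 - ‖v‖)]
      calc (1 + ‖v‖) ^ 4 = ((1 + ‖v‖) ^ 2) ^ 2 := by ring
        _ ≤ (2 * (1 + ‖v‖ ^ 2)) ^ 2 := by gcongr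
        _ = _ := by ring
    rw [hS, SchwartzMap.smulLeftCLM_apply_apply hw, smul_eq_mul, norm_mul, norm_mul, norm_mul,
      norm_mul, Real.norm_of_nonneg (show (0 : ℝ) ≤ (1 + ‖v‖ ^ 2) ^ 2 by positivity)]
    calc ‖kconv k φ v‖ * (‖u v‖ * ‖ψ v‖)
        ≤ (C * (4 * (1 + ‖v‖ ^ 2) ^ 2)) * (‖u v‖ * ‖ψ v‖) := by
          gcongr
          exact (hC v).trans (by gcongr)
      _ = _ := by ring

/-! ### Temperate growth and partial derivatives -/

lemma HasTemperateGrowth_pd {u : E3 → ℝ} (hu : u.HasTemperateGrowth) (i : Fin 3) :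
    (pd i u).HasTemperateGrowth := by
  have h : (fderiv ℝ u).HasTemperateGrowth := by
    refine ⟨hu.1.fderiv_right (by simp), fun n => ?_⟩
    obtain ⟨k, C, hC⟩ := hu.2 (n + 1)
    exact ⟨k, C, fun x => by rw [norm_iteratedFDeriv_fderiv]; exact hC x⟩
  exact (ContinuousLinearMap.apply ℝ ℝ
    (EuclideanSpace.single i (1 : ℝ) : E3)).hasTemperateGrowth.comp h

lemma pd_mul {u w : E3 → ℝ} {v : E3} (i : Fin 3) (hu : DifferentiableAt ℝ u v)
    (hw : DifferentiableAt ℝ w v) :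
    pd i (fun x => u x * w x) v = u v * pd i w v + w v * pd i u v := by
  simp [pd, fderiv_fun_mul hu hw]

lemma pd_add {u w : E3 → ℝ} {v : E3} (i : Fin 3) (hu : DifferentiableAt ℝ u v)
    (hw : DifferentiableAt ℝ w v) :
    pd i (fun x => u x + w x) v = pd i u v + pd i w v := by
  simp [pd, fderiv_fun_add hu hw]

lemma temperate_diff {u : E3 → ℝ} (hu : u.HasTemperateGrowth) : Differentiable ℝ u :=
  hu.1.differentiable (by simp)

lemma pd_pd_mul {u w : E3 → ℝ} (hu : u.HasTemperateGrowth) (hw : w.HasTemperateGrowth)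
    (i j : Fin 3) (v : E3) :
    pd i (pd j fun x => u x * w x) v = u v * pd i (pd j w) v + pd j w v * pd i u v
      + (w v * pd i (pd j u) v + pd j u v * pd i w v) := by
  have e : (pd j fun x => u x * w x) = fun x => u x * pd j w x + w x * pd j u x :=
    funext fun x => pd_mul j (temperate_diff hu x) (temperate_diff hw x)
  have du := temperate_diff hu v
  have dw := temperate_diff hw v
  have dju := temperate_diff (HasTemperateGrowth_pd hu j) v
  have djw := temperate_diff (HasTemperateGrowth_pd hw j) v
  rw [e, ← pd_mul i du djw, ← pd_mul i dw dju]
  exact pd_add i (du.fun_mul djw) (dw.fun_mul dju)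

/-! ### The collision operator in non-divergence form -/

/-- The scalar coefficient `∑_{ij} a_ij * ∂_i ∂_j g`, the second divergence of `a * g`. -/
def cConv (g : SchwartzMap E3 ℝ) (v : E3) : ℝ :=
  ∑ i : Fin 3, ∑ j : Fin 3, kconv (fun z => aK z i j) (spd i (spd j g)) v

lemma aConv_eq (g : E3 → ℝ) (v : E3) (i j : Fin 3) :
    aConv g v i j = kconv (fun z => aK z i j) g v := rfl

lemma aConv_symm (g : E3 → ℝ) (v : E3) (i j : Fin 3) : aConv g v i j = aConv g v j i := by
  simp only [aConv, Matrix.of_apply, fun z => aK_symm z i j]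

lemma landauQ_flux (g : SchwartzMap E3 ℝ) (F : E3 → ℝ) (i : Fin 3) (w : E3) :
    (∫ vs : E3, ∑ j : Fin 3, aK (w - vs) i j * (g vs * pd j F w - pd j g vs * F w))
      = ∑ j : Fin 3, (kconv (fun z => aK z i j) g w * pd j F w
          - kconv (fun z => aK z i j) (spd j g) w * F w) := by
  have hI (φ : SchwartzMap E3 ℝ) (j : Fin 3) : Integrable fun vs => aK (w - vs) i j * φ vs :=
    integrable_kernel_mul (measurable_aK i j) (abs_aK_le · i j) φ w
  have e (j : Fin 3) : (fun vs => aK (w - vs) i j * (g vs * pd j F w - pd j g vs * F w))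
      = fun vs => aK (w - vs) i j * g vs * pd j F w - aK (w - vs) i j * spd j g vs * F w := by
    ext vs
    rw [coe_spd]
    ring
  rw [integral_finsetSum]
  · refine Finset.sum_congr rfl fun j _ => ?_
    rw [e, integral_sub ((hI g j).mul_const _) ((hI _ j).mul_const _), integral_mul_const,
      integral_mul_const]
    rfl
  · intro j _
    rw [e]
    exact ((hI g j).mul_const _).sub ((hI _ j).mul_const _)

/-- `Q(g,F) = (a*g) : ∇²F − (∂_i∂_j (a_ij * g)) F`. The first-order terms cancel because `a` is
symmetric. -/
lemma landauQ_eq (g : SchwartzMap E3 ℝ) {F : E3 → ℝ} (hF : F.HasTemperateGrowth) (v : E3) :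
    landauQ g F v
      = (∑ i : Fin 3, ∑ j : Fin 3, aConv g v i j * pd i (pd j F) v) - cConv g v * F v := by
  have hd (φ : SchwartzMap E3 ℝ) (i j : Fin 3) : Differentiable ℝ (kconv (fun z => aK z i j) φ) :=
    kconv_differentiable (measurable_aK i j) (abs_aK_le · i j) φ
  have dF := temperate_diff hF
  have dpF := fun j => temperate_diff (HasTemperateGrowth_pd hF j)
  have key (i : Fin 3) : fderiv ℝ (fun w => ∫ vs : E3, ∑ j : Fin 3,
        aK (w - vs) i j * (g vs * pd j F w - pd j g vs * F w)) v (EuclideanSpace.single i 1)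
      = ∑ j : Fin 3,
        ((kconv (fun z => aK z i j) g v * pd i (pd j F) v
            + pd j F v * kconv (fun z => aK z i j) (spd i g) v)
          - (kconv (fun z => aK z i j) (spd j g) v * pd i F v
            + F v * kconv (fun z => aK z i j) (spd i (spd j g)) v)) := by
    simp only [landauQ_flux]
    rw [fderiv_fun_sum fun j _ => ((hd g i j v).fun_mul (dpF j v)).fun_sub
      ((hd (spd j g) i j v).fun_mul (dF v)), _root_.sum_apply]
    refine Finset.sum_congr rfl fun j _ => ?_
    rw [← pd_kconv (measurable_aK i j) (abs_aK_le · i j) g i,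
      ← pd_kconv (measurable_aK i j) (abs_aK_le · i j) (spd j g) i,
      ← pd_mul i (hd g i j v) (dpF j v), ← pd_mul i (hd (spd j g) i j v) (dF v),
      fderiv_fun_sub ((hd g i j v).fun_mul (dpF j v)) ((hd (spd j g) i j v).fun_mul (dF v))]
    rfl
  -- the two first-order sums agree after exchanging the summation indices
  have swap : ∑ i : Fin 3, ∑ j : Fin 3, pd j F v * kconv (fun z => aK z i j) (spd i g) v
      = ∑ i : Fin 3, ∑ j : Fin 3, kconv (fun z => aK z i j) (spd j g) v * pd i F v := by
    rw [Finset.sum_comm]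
    refine Finset.sum_congr rfl fun i _ => Finset.sum_congr rfl fun j _ => ?_
    rw [mul_comm, funext fun z => aK_symm z j i]
  simp only [landauQ, key, Finset.sum_sub_distrib, Finset.sum_add_distrib, swap, cConv,
    Finset.sum_mul, aConv_eq, mul_comm (F v)]
  ring

/-- `Q(g,F)` is integrable against a temperate function times a Schwartz function. -/
lemma integrable_landauQ_mul (g h : SchwartzMap E3 ℝ) {F u : E3 → ℝ} (hF : F.HasTemperateGrowth)
    (hu : u.HasTemperateGrowth) : Integrable fun v => landauQ g F v * (u v * h v) := by
  have e : (fun v => landauQ g F v * (u v * h v)) = fun v =>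
      (∑ i : Fin 3, ∑ j : Fin 3, kconv (fun z => aK z i j) g v * ((pd i (pd j F) v * u v) * h v))
      - ∑ i : Fin 3, ∑ j : Fin 3,
        kconv (fun z => aK z i j) (spd i (spd j g)) v * ((F v * u v) * h v) := by
    ext v
    simp only [landauQ_eq g hF, cConv, aConv_eq, sub_mul, Finset.sum_mul, mul_assoc]
  rw [e]
  refine .sub ?_ ?_ <;>
    refine integrable_finsetSum _ fun i _ => integrable_finsetSum _ fun j _ =>
      integrable_kconv_mul (measurable_aK i j) (abs_aK_le · i j) _ _ ?_
  · exact (HasTemperateGrowth_pd (HasTemperateGrowth_pd hF j) i).fun_mul hu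
  · exact hF.fun_mul hu

/-- for Schwartz `f, g, h` and a smooth positive weight `m` of temperate growth,
`⟨Q(g,f), h m²⟩ − ⟨Q(g,fm), h m⟩
  = −2 ∫ (a*g):(∇f⊗∇m) h m dv − ∫ (a*g):(∇²m) f h m dv`. -/
theorem landau_weight_commutator_identity
    (f g h : SchwartzMap E3 ℝ) (m : E3 → ℝ)
    (hm_pos : ∀ v, 0 < m v) (hm_temp : Function.HasTemperateGrowth m) :
    pairL (landauQ (⇑g) (⇑f)) (fun v => h v * m v ^ 2)
      - pairL (landauQ (⇑g) (fun v => f v * m v)) (fun v => h v * m v)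
    = -2 * (∫ v : E3,
        (∑ i : Fin 3, ∑ j : Fin 3, aConv (⇑g) v i j * pd i (⇑f) v * pd j m v) * h v * m v)
      - ∫ v : E3,
        (∑ i : Fin 3, ∑ j : Fin 3, aConv (⇑g) v i j * pd i (pd j m) v) * f v * h v * m v := by
  have hf := f.hasTemperateGrowth
  have hfm : (fun v => f v * m v).HasTemperateGrowth := hf.fun_mul hm_temp
  have tp := fun {u : E3 → ℝ} (hu : u.HasTemperateGrowth) i => HasTemperateGrowth_pd hu i
  have hA {u : E3 → ℝ} (hu : u.HasTemperateGrowth) (i j : Fin 3) :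
      Integrable fun v => aConv (⇑g) v i j * (u v * h v) :=
    integrable_kconv_mul (measurable_aK i j) (abs_aK_le · i j) g h hu
  have I1 : Integrable fun v => landauQ g f v * (h v * m v ^ 2) := by
    simpa only [mul_comm] using integrable_landauQ_mul g h hf (hm_temp.fun_pow 2)
  have I2 : Integrable fun v => landauQ g (fun v => f v * m v) v * (h v * m v) := by
    simpa only [mul_comm] using integrable_landauQ_mul g h hfm hm_temp
  have I3 : Integrable fun v =>
      (∑ i : Fin 3, ∑ j : Fin 3, aConv (⇑g) v i j * pd i (⇑f) v * pd j m v) * h v * m v := by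
    have := integrable_finsetSum univ fun i _ => integrable_finsetSum univ fun j _ =>
      hA (((tp hf i).fun_mul (tp hm_temp j)).fun_mul hm_temp) i j
    refine this.congr (.of_forall fun v => ?_)
    simp only [Finset.sum_mul]
    refine Finset.sum_congr rfl fun i _ => Finset.sum_congr rfl fun j _ => ?_
    ring
  have I4 : Integrable fun v =>
      (∑ i : Fin 3, ∑ j : Fin 3, aConv (⇑g) v i j * pd i (pd j m) v) * f v * h v * m v := by
    have := integrable_finsetSum univ fun i _ => integrable_finsetSum univ fun j _ =>
      hA (((tp (tp hm_temp j) i).fun_mul hf).fun_mul hm_temp) i j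
    refine this.congr (.of_forall fun v => ?_)
    simp only [Finset.sum_mul]
    refine Finset.sum_congr rfl fun i _ => Finset.sum_congr rfl fun j _ => ?_
    ring
  simp only [pairL]
  rw [← integral_sub I1 I2, ← integral_const_mul, ← integral_sub (I3.const_mul _) I4]
  congr 1
  ext v
  have swap : ∑ i : Fin 3, ∑ j : Fin 3, aConv (⇑g) v i j * (pd j (⇑f) v * pd i m v)
      = ∑ i : Fin 3, ∑ j : Fin 3, aConv (⇑g) v i j * (pd i (⇑f) v * pd j m v) := by
    rw [Finset.sum_comm]
    simp only [aConv_symm (⇑g) v]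
  have expand : ∑ i : Fin 3, ∑ j : Fin 3, aConv (⇑g) v i j * pd i (pd j fun v => f v * m v) v
      = f v * (∑ i : Fin 3, ∑ j : Fin 3, aConv (⇑g) v i j * pd i (pd j m) v)
        + 2 * (∑ i : Fin 3, ∑ j : Fin 3, aConv (⇑g) v i j * (pd i (⇑f) v * pd j m v))
        + m v * (∑ i : Fin 3, ∑ j : Fin 3, aConv (⇑g) v i j * pd i (pd j f) v) := by
    rw [two_mul]
    nth_rewrite 2 [← swap]
    simp only [Finset.mul_sum, ← Finset.sum_add_distrib]
    refine Finset.sum_congr rfl fun i _ => Finset.sum_congr rfl fun j _ => ?_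
    rw [pd_pd_mul hf hm_temp]
    ring
  rw [landauQ_eq g hf, landauQ_eq g hfm, expand]
  simp only [mul_assoc (aConv _ _ _ _)]
  ring

end
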